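/- For every Schwartz function f : ℝ → ℝ and every x ∈ ℝ, the renormalized second-order fractional derivative converges to the ordinary second derivative: the limit as α → 2 from below of Γ(1+α) (sin(απ/2)/π) ∫_{0}^{∞} (f(x+ξ) - 2f(x) + f(x-ξ)) ξ^{-(α+1)} dξ equals f''(x). -/

import Mathlib

open MeasureTheory Real Filter

lemma aux_taylor (f : ℝ → ℝ) (hf : ContDiff ℝ 5 f) (x : ℝ) :
    ∃ C : ℝ, 0 ≤ C ∧ ∀ ξ ∈ Set.Icc (0:ℝ) 1,
      |f (x + ξ) - 2 * f x + f (x - ξ) - deriv (deriv f) x * ξ ^ 2| ≤ C * ξ ^ 3 := by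
  set g : ℝ → ℝ := fun ξ => f (x + ξ) - 2 * f x + f (x - ξ) with hg
  have hgc : ContDiff ℝ 3 g := by
    have := hf.of_le (show (3 : WithTop ℕ∞) ≤ 5 by norm_num)
    fun_prop
  have hd : Differentiable ℝ f := hf.differentiable (by norm_num)
  have hd1 : ContDiff ℝ 4 (deriv f) := by
    have : ContDiff ℝ (4 + 1) f := by convert hf using 1; norm_num
    exact (contDiff_succ_iff_deriv.1 this).2.2
  have hd2 : Differentiable ℝ (deriv f) := hd1.differentiable (by norm_num)
  have e1 : deriv g = fun ξ => deriv f (x + ξ) - deriv f (x - ξ) := by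
    funext ξ
    have h1 : HasDerivAt (fun ξ => f (x + ξ)) (deriv f (x + ξ)) ξ :=
      (hd (x + ξ)).hasDerivAt.comp_const_add x ξ
    have h2 : HasDerivAt (fun ξ => f (x - ξ)) (-deriv f (x - ξ)) ξ :=
      (hd (x - ξ)).hasDerivAt.comp_const_sub x ξ
    have := ((h1.sub_const (2 * f x)).add h2).deriv
    exact this.trans (sub_eq_add_neg _ _).symm
  have e2 : deriv (deriv g) 0 = 2 * deriv (deriv f) x := by
    rw [e1]
    have h1 : HasDerivAt (fun ξ => deriv f (x + ξ)) (deriv (deriv f) (x + 0)) 0 :=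
      (hd2 (x + 0)).hasDerivAt.comp_const_add x 0
    have h2 : HasDerivAt (fun ξ => deriv f (x - ξ)) (-deriv (deriv f) (x - 0)) 0 :=
      (hd2 (x - 0)).hasDerivAt.comp_const_sub x 0
    have := (h1.sub h2).deriv
    refine this.trans ?_
    simp; ring
  obtain ⟨C, hC⟩ := exists_taylor_mean_remainder_bound (n := 2) (f := g) (zero_le_one (α := ℝ))
    (by exact_mod_cast hgc.contDiffOn)
  have hm : (0:ℝ) ∈ Set.Icc (0:ℝ) 1 := by simp
  have hu : UniqueDiffOn ℝ (Set.Icc (0:ℝ) 1) := uniqueDiffOn_Icc one_pos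
  refine ⟨|C|, abs_nonneg _, fun ξ hξ => ?_⟩
  have h := hC ξ hξ
  rw [taylorWithinEval_succ, taylorWithinEval_succ, taylor_within_zero_eval,
    iteratedDerivWithin_eq_iteratedDeriv hu (hgc.contDiffAt.of_le (by norm_num)) hm,
    iteratedDerivWithin_eq_iteratedDeriv hu (hgc.contDiffAt.of_le (by norm_num)) hm] at h
  have i2 : iteratedDeriv (1+1) g 0 = 2 * deriv (deriv f) x := by
    rw [iteratedDeriv_succ, iteratedDeriv_one, e2]
  have i1 : iteratedDeriv (0+1) g 0 = 0 := by
    rw [zero_add, iteratedDeriv_one, e1]; simp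
  have i0 : g 0 = 0 := by simp [hg]; ring
  rw [i2, i1, i0, Real.norm_eq_abs] at h
  have : g ξ - deriv (deriv f) x * ξ ^ 2 = g ξ - (0 + (((0:ℕ) + 1 : ℝ) * (Nat.factorial 0))⁻¹ * (ξ - 0) ^ (0+1) * 0 + (((1:ℕ) + 1 : ℝ) * (Nat.factorial 1))⁻¹ * (ξ - 0) ^ (1+1) * (2 * deriv (deriv f) x)) := by
    simp; ring
  change |g ξ - _| ≤ _
  rw [this]
  simp only [smul_eq_mul] at h
  refine (by simpa using h : _ ≤ C * ξ ^ 3) |>.trans' (by simp) |>.trans ?_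
  gcongr
  · exact pow_nonneg hξ.1 3
  · exact le_abs_self C

lemma aux_bound (f : ℝ → ℝ) (hfc : Continuous f) (x a M C : ℝ) (hM : ∀ y, |f y| ≤ M)
    (hC0 : 0 ≤ C)
    (hC : ∀ ξ ∈ Set.Icc (0:ℝ) 1,
      |f (x + ξ) - 2 * f x + f (x - ξ) - a * ξ ^ 2| ≤ C * ξ ^ 3) :
    ∃ K : ℝ, ∀ α ∈ Set.Ioo (1:ℝ) 2,
      |(∫ ξ in Set.Ioi (0 : ℝ), (f (x + ξ) - 2 * f x + f (x - ξ)) * ξ ^ (-(α + 1)))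
        - a / (2 - α)| ≤ K := by
  refine ⟨C + 4 * M, fun α hα => ?_⟩
  obtain ⟨h1, h2⟩ := hα
  have hM0 : 0 ≤ M := (abs_nonneg _).trans (hM 0)
  set G : ℝ → ℝ := fun ξ => (f (x + ξ) - 2 * f x + f (x - ξ)) * ξ ^ (-(α + 1)) with hG
  have hGm : Measurable G := by
    have := hfc.measurable
    fun_prop
  -- near part
  have hP : IntegrableOn (fun ξ : ℝ => a * ξ ^ (1 - α)) (Set.Ioc 0 1) := by
    have := (intervalIntegral.intervalIntegrable_rpow' (a := 0) (b := 1)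
      (r := 1 - α) (by linarith)).const_mul a
    rwa [intervalIntegrable_iff_integrableOn_Ioc_of_le zero_le_one] at this
  have hPi : ∫ ξ in Set.Ioc (0:ℝ) 1, a * ξ ^ (1 - α) = a / (2 - α) := by
    rw [← intervalIntegral.integral_of_le zero_le_one, intervalIntegral.integral_const_mul,
      integral_rpow (Or.inl (by linarith))]
    have : (1 - α + 1) ≠ 0 := by linarith
    rw [Real.zero_rpow this, Real.one_rpow, show 1 - α + 1 = 2 - α by ring]
    ring
  have hRb : ∀ᵐ ξ ∂(volume.restrict (Set.Ioc (0:ℝ) 1)), ‖G ξ - a * ξ ^ (1 - α)‖ ≤ C := by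
    refine (ae_restrict_iff' measurableSet_Ioc).2 (Eventually.of_forall fun ξ hξ => ?_)
    have hp := hξ.1
    have e : ξ ^ (1 - α) = ξ ^ 2 * ξ ^ (-(α + 1)) := by
      rw [← Real.rpow_natCast, ← Real.rpow_add hp]; congr 1; push_cast; ring
    have e' : ξ ^ 3 * ξ ^ (-(α + 1)) = ξ ^ (2 - α) := by
      rw [← Real.rpow_natCast, ← Real.rpow_add hp]; congr 1; push_cast; ring
    rw [e, hG]
    have : (f (x + ξ) - 2 * f x + f (x - ξ)) * ξ ^ (-(α + 1)) - a * (ξ ^ 2 * ξ ^ (-(α + 1)))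
      = (f (x + ξ) - 2 * f x + f (x - ξ) - a * ξ ^ 2) * ξ ^ (-(α + 1)) := by ring
    simp only [this, Real.norm_eq_abs, abs_mul, abs_of_pos (Real.rpow_pos_of_pos hp _)]
    calc _ ≤ C * ξ ^ 3 * ξ ^ (-(α + 1)) := by
          gcongr
          exact hC ξ ⟨hp.le, hξ.2⟩
      _ = C * ξ ^ (2 - α) := by rw [mul_assoc, e']
      _ ≤ C * 1 := by
          gcongr
          exact Real.rpow_le_one hp.le hξ.2 (by linarith)
      _ = C := mul_one C
  have hCi : IntegrableOn (fun _ : ℝ => C) (Set.Ioc (0:ℝ) 1) := by simp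
  have hR : IntegrableOn (fun ξ => G ξ - a * ξ ^ (1 - α)) (Set.Ioc (0:ℝ) 1) :=
    Integrable.mono' hCi (by have := hGm; exact Measurable.aestronglyMeasurable (by fun_prop)) hRb
  have hGn : IntegrableOn G (Set.Ioc (0:ℝ) 1) := by
    have := hR.add hP
    refine this.congr (Eventually.of_forall fun ξ => ?_)
    simp
  have hRi : |(∫ ξ in Set.Ioc (0:ℝ) 1, G ξ) - a / (2 - α)| ≤ C := by
    rw [← hPi, ← integral_sub hGn hP]
    have := norm_integral_le_of_norm_le hCi hRb
    simpa using this
  -- far part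
  have hQ : IntegrableOn (fun ξ : ℝ => 4 * M * ξ ^ (-2 : ℝ)) (Set.Ioi 1) :=
    (integrableOn_Ioi_rpow_of_lt (by norm_num) one_pos).const_mul _
  have hQb : ∀ᵐ ξ ∂(volume.restrict (Set.Ioi (1:ℝ))), ‖G ξ‖ ≤ 4 * M * ξ ^ (-2 : ℝ) := by
    refine (ae_restrict_iff' measurableSet_Ioi).2 (Eventually.of_forall fun ξ hξ => ?_)
    have hξ1 : (1:ℝ) < ξ := hξ
    have hp : 0 < ξ := by linarith
    simp only [hG, Real.norm_eq_abs, abs_mul, abs_of_pos (Real.rpow_pos_of_pos hp _)]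
    have b : |f (x + ξ) - 2 * f x + f (x - ξ)| ≤ 4 * M := by
      have b1 := abs_le.1 (hM (x + ξ))
      have b2 := abs_le.1 (hM x)
      have b3 := abs_le.1 (hM (x - ξ))
      rw [abs_le]; constructor <;> linarith
    have c : ξ ^ (-(α + 1)) ≤ ξ ^ (-2 : ℝ) :=
      Real.rpow_le_rpow_of_exponent_le hξ1.le (by linarith)
    exact mul_le_mul b c (Real.rpow_nonneg hp.le _) (by positivity)
  have hGf : IntegrableOn G (Set.Ioi (1:ℝ)) :=
    Integrable.mono' hQ hGm.aestronglyMeasurable hQb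
  have hQi : |∫ ξ in Set.Ioi (1:ℝ), G ξ| ≤ 4 * M := by
    have := norm_integral_le_of_norm_le hQ hQb
    rw [integral_const_mul, integral_Ioi_rpow_of_lt (by norm_num) one_pos] at this
    norm_num at this
    simpa using this
  have hs : ∫ ξ in Set.Ioi (0:ℝ), G ξ
      = (∫ ξ in Set.Ioc (0:ℝ) 1, G ξ) + ∫ ξ in Set.Ioi (1:ℝ), G ξ := by
    rw [← setIntegral_union (Set.Ioc_disjoint_Ioi le_rfl) measurableSet_Ioi hGn hGf,
      Set.Ioc_union_Ioi_eq_Ioi zero_le_one]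
  rw [hs, abs_le]
  have q1 := abs_le.1 hRi
  have q2 := abs_le.1 hQi
  constructor <;> linarith

/-- The renormalized second-order fractional derivative converges to the ordinary second
derivative: as `α → 2⁻`,
`Γ(1+α) (sin(απ/2)/π) ∫_0^∞ (f(x+ξ) - 2f(x) + f(x-ξ)) ξ^{-(α+1)} dξ → f''(x)`. -/
theorem fractional_deriv_tendsto_second_deriv (f : SchwartzMap ℝ ℝ) (x : ℝ) :
    Tendsto (fun α : ℝ => Real.Gamma (1 + α) * (Real.sin (α * π / 2) / π) *
        ∫ ξ in Set.Ioi (0 : ℝ), (f (x + ξ) - 2 * f x + f (x - ξ)) * ξ ^ (-(α + 1)))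
      (nhdsWithin 2 (Set.Iio 2)) (nhds (deriv (deriv f) x)) := by
  obtain ⟨C, hC0, hC⟩ := aux_taylor f (f.smooth 5) x
  obtain ⟨K, hK⟩ := aux_bound f f.continuous x (deriv (deriv f) x)
    (SchwartzMap.seminorm ℝ 0 0 f) C (fun y => SchwartzMap.norm_le_seminorm ℝ f y) hC0 hC
  set a := deriv (deriv f) x
  set I : ℝ → ℝ := fun α => ∫ ξ in Set.Ioi (0 : ℝ),
    (f (x + ξ) - 2 * f x + f (x - ξ)) * ξ ^ (-(α + 1)) with hI
  set P : ℝ → ℝ := fun α => Real.Gamma (1 + α) * (Real.sin (α * π / 2) / π) with hPdef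
  have hΓ : Tendsto (fun α : ℝ => Real.Gamma (1 + α)) (nhdsWithin 2 (Set.Iio 2)) (nhds 2) := by
    have hc : ContinuousAt Real.Gamma (1 + 2) :=
      (Real.differentiableAt_Gamma (fun m h => by
        have : (0:ℝ) ≤ m := Nat.cast_nonneg m
        linarith)).continuousAt
    have h3 : Real.Gamma (1 + 2) = 2 := by
      have := Real.Gamma_nat_eq_factorial 2
      norm_num [Nat.factorial] at this ⊢
    have hc2 : ContinuousAt (fun α : ℝ => Real.Gamma (1 + α)) 2 :=
      ContinuousAt.comp (f := fun α : ℝ => 1 + α) hc (by fun_prop)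
    have := hc2.tendsto
    rw [h3] at this
    exact this.mono_left nhdsWithin_le_nhds
  have hS : Tendsto (fun α : ℝ => Real.sin (α * π / 2) / (2 - α))
      (nhdsWithin 2 (Set.Iio 2)) (nhds (π / 2)) := by
    have hd : HasDerivAt (fun α : ℝ => Real.sin (α * π / 2)) (-(π / 2)) 2 := by
      have h0 : HasDerivAt (fun α : ℝ => α * π / 2) (π / 2) 2 := by
        simpa using ((hasDerivAt_id (2:ℝ)).mul_const π).div_const 2
      have := h0.sin
      simpa using this
    have := (hasDerivAt_iff_tendsto_slope.1 hd).neg.mono_left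
      (nhdsWithin_mono 2 (fun y (hy : y < 2) => ne_of_lt hy))
    rw [neg_neg] at this
    refine this.congr (fun α => ?_)
    have e : Real.sin (2 * π / 2) = 0 := by simp
    rw [slope_def_field, e, sub_zero, ← div_neg, neg_sub]
  have hPd : Tendsto (fun α => P α / (2 - α)) (nhdsWithin 2 (Set.Iio 2)) (nhds 1) := by
    have := (hΓ.mul hS).div_const π
    have e : 2 * (π / 2) / π = 1 := by field_simp
    rw [e] at this
    refine this.congr (fun α => ?_)
    simp only [hPdef]; ring
  have hP0 : Tendsto P (nhdsWithin 2 (Set.Iio 2)) (nhds 0) := by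
    have h2 : Tendsto (fun α : ℝ => 2 - α) (nhdsWithin 2 (Set.Iio 2)) (nhds 0) := by
      have : ContinuousAt (fun α : ℝ => 2 - α) 2 := by fun_prop
      have := this.tendsto
      rw [sub_self] at this
      exact this.mono_left nhdsWithin_le_nhds
    have := hPd.mul h2
    rw [mul_zero] at this
    refine this.congr' ?_
    filter_upwards [self_mem_nhdsWithin] with α hα
    have : 2 - α ≠ 0 := by
      have : α < 2 := hα
      linarith
    field_simp
  have hE : Tendsto (fun α => P α * (I α - a / (2 - α))) (nhdsWithin 2 (Set.Iio 2)) (nhds 0) := by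
    have hb := (hP0.abs).mul_const K
    rw [abs_zero, zero_mul] at hb
    refine squeeze_zero_norm' ?_ hb
    filter_upwards [Ioo_mem_nhdsLT (show (1:ℝ) < 2 by norm_num)] with α hα
    rw [Real.norm_eq_abs, abs_mul]
    exact mul_le_mul_of_nonneg_left (hK α hα) (abs_nonneg _)
  have := hE.add (hPd.mul_const a)
  rw [zero_add, one_mul] at this
  refine this.congr (fun α => ?_)
  ring
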